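/- arXiv:math/0204346 — 2 statements merged into one kernel-verified Lean document; each statement's English description precedes it below -/
import Mathlib

section
/- Let t₁, t₂ be triples with λ₁, λ₂, λ₁+λ₂ nonzero, and set t₃ = t₁+t₂+e₂ and t₄ = t₁+t₂−e₂+e₃. Identifying V_{t₁} with the domain V_{t₄+t₂*+e₂} of Y_{t₄,t₂*} and with the domain of Y'_{t₃,t₂*}, and V_{t₂} with the domain of Y_{t₁*,t₄} and of Y'_{t₁*,t₃}, the following hold as linear maps from V_{t₁}⊗V_{t₂}: L'_{t₁,t₂} = (I_{t₄}⊗∩_{t₂})∘(Y_{t₄,t₂*}⊗I_{t₂}) = (∩_{t₁*}⊗I_{t₄})∘(I_{t₁}⊗Y_{t₁*,t₄}), and L_{t₁,t₂} = (−1)^{σ₂}·(λ₁/(λ₁+λ₂))·(I_{t₃}⊗∩_{t₂})∘(Y'_{t₃,t₂*}⊗I_{t₂}) = (−1)^{σ₁}·(λ₂/(λ₁+λ₂))·(∩_{t₁*}⊗I_{t₃})∘(I_{t₁}⊗Y'_{t₁*,t₃}). -/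
set_option linter.unusedVariables false

open TensorProduct

noncomputable section

/-- a triple t = (λ, μ, σ) ∈ ℚ × ℚ × ℤ/2 -/
structure Triple where
  lam : ℚ
  mu : ℚ
  sg : ZMod 2

instance : Add Triple := ⟨fun a b => ⟨a.lam + b.lam, a.mu + b.mu, a.sg + b.sg⟩⟩
instance : Neg Triple := ⟨fun a => ⟨-a.lam, -a.mu, -a.sg⟩⟩
instance : Sub Triple := ⟨fun a b => a + -b⟩

def e₂ : Triple := ⟨0, 1, 0⟩
def e₃ : Triple := ⟨0, 0, 1⟩
/-- t* = (−λ, −μ, σ+1) -/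
def Triple.star (t : Triple) : Triple := ⟨-t.lam, -t.mu, t.sg + 1⟩

/-- the underlying space of every V_t: basis v = (1,0) (degree σ), w = (0,1) (degree σ+1) -/
abbrev V : Type := ℚ × ℚ
abbrev VV : Type := V ⊗[ℚ] V
abbrev VVV : Type := V ⊗[ℚ] VV

def vv : V := (1, 0)
def ww : V := (0, 1)

/-- (−1)^σ -/
def sgn (s : ZMod 2) : ℚ := if s = 0 then 1 else -1

/-- H: v ↦ (μ+1)v, w ↦ (μ−1)w -/
def opH (t : Triple) : V →ₗ[ℚ] V :=
  LinearMap.prodMap ((t.mu + 1) • LinearMap.id) ((t.mu - 1) • LinearMap.id)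
/-- D: multiplication by λ -/
def opD (t : Triple) : V →ₗ[ℚ] V := t.lam • LinearMap.id
/-- E: v ↦ 0, w ↦ λv -/
def opE (t : Triple) : V →ₗ[ℚ] V := (LinearMap.inl ℚ ℚ ℚ) ∘ₗ (t.lam • LinearMap.snd ℚ ℚ ℚ)
/-- F: v ↦ w, w ↦ 0 -/
def opF (t : Triple) : V →ₗ[ℚ] V := (LinearMap.inr ℚ ℚ ℚ) ∘ₗ (LinearMap.fst ℚ ℚ ℚ)
/-- the parity operator x ↦ (−1)^{deg x} x on V_t -/
def opJ (t : Triple) : V →ₗ[ℚ] V :=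
  LinearMap.prodMap (sgn t.sg • LinearMap.id) ((- sgn t.sg) • LinearMap.id)

/-- the four generators H, D, E, F of gl(1|1) -/
inductive Gen | H | D | E | F

/-- H and D have degree 0; E and F have degree 1 -/
def Gen.isEven : Gen → Bool
  | .H => true | .D => true | .E => false | .F => false

def op : Gen → Triple → V →ₗ[ℚ] V
  | .H, t => opH t
  | .D, t => opD t
  | .E, t => opE t
  | .F, t => opF t

/-- the super-Leibniz action X·(x⊗y) = (X·x)⊗y + (−1)^{deg X·deg x}·x⊗(X·y)
on V_{t₁}⊗V_{t₂} (the sign being implemented by the parity operator) -/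
def op2 (g : Gen) (t₁ t₂ : Triple) : VV →ₗ[ℚ] VV :=
  TensorProduct.map (op g t₁) LinearMap.id +
  TensorProduct.map (if g.isEven then LinearMap.id else opJ t₁) (op g t₂)

/-- the linear map ℚ×ℚ → M sending (1,0) ↦ p and (0,1) ↦ q -/
def bmap {M : Type*} [AddCommGroup M] [Module ℚ M] (p q : M) : V →ₗ[ℚ] M :=
  LinearMap.coprod (LinearMap.toSpanSingleton ℚ M p) (LinearMap.toSpanSingleton ℚ M q)

/-- Y_{t₁,t₂} : V_{t₁+t₂+e₂} → V_{t₁}⊗V_{t₂} -/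
def Ymap (t₁ t₂ : Triple) : V →ₗ[ℚ] VV :=
  bmap (vv ⊗ₜ[ℚ] vv) (ww ⊗ₜ[ℚ] vv + sgn t₁.sg • (vv ⊗ₜ[ℚ] ww))

/-- Y'_{t₁,t₂} : V_{t₁+t₂−e₂+e₃} → V_{t₁}⊗V_{t₂} -/
def Y'map (t₁ t₂ : Triple) : V →ₗ[ℚ] VV :=
  bmap ((t₁.lam + t₂.lam)⁻¹ •
      (t₁.lam • (vv ⊗ₜ[ℚ] ww) - (sgn t₁.sg * t₂.lam) • (ww ⊗ₜ[ℚ] vv)))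
    (ww ⊗ₜ[ℚ] ww)

/-- L_{t₁,t₂} : V_{t₁}⊗V_{t₂} → V_{t₁+t₂+e₂} -/
def Lmap (t₁ t₂ : Triple) : VV →ₗ[ℚ] V :=
  TensorProduct.lift (LinearMap.mk₂ ℚ
    (fun x y => ((x.1 * y.1 : ℚ),
      (t₁.lam / (t₁.lam + t₂.lam)) * (x.2 * y.1)
        + (sgn t₁.sg * t₂.lam / (t₁.lam + t₂.lam)) * (x.1 * y.2)))
    (by intro x x' y; apply Prod.ext <;> simp <;> ring)
    (by intro a x y; apply Prod.ext <;> simp [smul_eq_mul] <;> ring)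
    (by intro x y y'; apply Prod.ext <;> simp <;> ring)
    (by intro a x y; apply Prod.ext <;> simp [smul_eq_mul] <;> ring))

/-- L'_{t₁,t₂} : V_{t₁}⊗V_{t₂} → V_{t₁+t₂−e₂+e₃} -/
def L'map (t₁ t₂ : Triple) : VV →ₗ[ℚ] V :=
  TensorProduct.lift (LinearMap.mk₂ ℚ
    (fun x y => ((x.1 * y.2 - sgn t₁.sg * (x.2 * y.1) : ℚ), (x.2 * y.2 : ℚ)))
    (by intro x x' y; apply Prod.ext <;> simp <;> ring)
    (by intro a x y; apply Prod.ext <;> simp [smul_eq_mul] <;> ring)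
    (by intro x y y'; apply Prod.ext <;> simp <;> ring)
    (by intro a x y; apply Prod.ext <;> simp [smul_eq_mul] <;> ring))

/-- ∩_t : V_{t*}⊗V_t → ℚ -/
def capMap (t : Triple) : VV →ₗ[ℚ] ℚ :=
  TensorProduct.lift (LinearMap.mk₂ ℚ
    (fun x y => (x.1 * y.2 + sgn t.sg * (x.2 * y.1) : ℚ))
    (by intro x x' y; simp; ring)
    (by intro a x y; simp [smul_eq_mul]; ring)
    (by intro x y y'; simp; ring)
    (by intro a x y; simp [smul_eq_mul]; ring))

/-- ∪_t : ℚ → V_{t*}⊗V_t -/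
def cupMap (t : Triple) : ℚ →ₗ[ℚ] VV :=
  LinearMap.toSpanSingleton ℚ VV (ww ⊗ₜ[ℚ] vv - sgn t.sg • (vv ⊗ₜ[ℚ] ww))


theorem aux_sgn_add (a b : ZMod 2) : sgn (a + b) = sgn a * sgn b := by
  fin_cases a <;> fin_cases b <;> simp [sgn] <;> decide
theorem aux_sgn_sq (a : ZMod 2) : sgn a * sgn a = 1 := by
  unfold sgn; split_ifs <;> norm_num
theorem aux_sgn_one : sgn 1 = -1 := by simp [sgn]
theorem aux_sgn_zero : sgn 0 = 1 := by simp [sgn]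
theorem aux_neg (a : ZMod 2) : -a = a := by revert a; decide
theorem aux_add_lam (a b : Triple) : (a + b).lam = a.lam + b.lam := rfl
theorem aux_add_sg (a b : Triple) : (a + b).sg = a.sg + b.sg := rfl
theorem aux_sub_sg (a b : Triple) : (a - b).sg = a.sg + -b.sg := rfl

/-- Lemma 16: the projections L' and L expressed through Y, Y' and ∩. -/
theorem stmt10 (t₁ t₂ : Triple) (h₁ : t₁.lam ≠ 0) (h₂ : t₂.lam ≠ 0)
    (h₁₂ : t₁.lam + t₂.lam ≠ 0) :
    L'map t₁ t₂ =
      (TensorProduct.rid ℚ V).toLinearMap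
        ∘ₗ TensorProduct.map LinearMap.id (capMap t₂)
        ∘ₗ (TensorProduct.assoc ℚ V V V).toLinearMap
        ∘ₗ TensorProduct.map (Ymap (t₁ + t₂ - e₂ + e₃) t₂.star) LinearMap.id ∧
    L'map t₁ t₂ =
      (TensorProduct.lid ℚ V).toLinearMap
        ∘ₗ TensorProduct.map (capMap t₁.star) LinearMap.id
        ∘ₗ (TensorProduct.assoc ℚ V V V).symm.toLinearMap
        ∘ₗ TensorProduct.map LinearMap.id (Ymap t₁.star (t₁ + t₂ - e₂ + e₃)) ∧
    Lmap t₁ t₂ =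
      (sgn t₂.sg * (t₁.lam / ((t₁ + t₂ + e₂).lam))) •
       ((TensorProduct.rid ℚ V).toLinearMap
        ∘ₗ TensorProduct.map LinearMap.id (capMap t₂)
        ∘ₗ (TensorProduct.assoc ℚ V V V).toLinearMap
        ∘ₗ TensorProduct.map (Y'map (t₁ + t₂ + e₂) t₂.star) LinearMap.id) ∧
    Lmap t₁ t₂ =
      (sgn t₁.sg * (t₂.lam / ((t₁ + t₂ + e₂).lam))) •
       ((TensorProduct.lid ℚ V).toLinearMap
        ∘ₗ TensorProduct.map (capMap t₁.star) LinearMap.id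
        ∘ₗ (TensorProduct.assoc ℚ V V V).symm.toLinearMap
        ∘ₗ TensorProduct.map LinearMap.id (Y'map t₁.star (t₁ + t₂ + e₂))) := by
  have q₁ := aux_sgn_sq t₁.sg
  have q₂ := aux_sgn_sq t₂.sg
  refine ⟨?_, ?_, ?_, ?_⟩ <;> ext <;>
    simp [L'map, Lmap, capMap, Ymap, Y'map, bmap, vv, ww, Triple.star, e₂, e₃, aux_add_lam,
      aux_add_sg, aux_sub_sg, aux_sgn_add, aux_sgn_one, aux_sgn_zero, aux_neg,
      TensorProduct.add_tmul, TensorProduct.tmul_add, TensorProduct.sub_tmul,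
      TensorProduct.tmul_sub, TensorProduct.smul_tmul', TensorProduct.neg_tmul,
      TensorProduct.tmul_neg, smul_sub] <;>
    field_simp <;> grind
end
end

section
/- Define Ω ∈ End(V_{t₁}⊗V_{t₂}) on homogeneous elements by Ω(x⊗y) = (1/2)·((H·x)⊗(D·y) + (D·x)⊗(H·y)) + (−1)^{deg x}·((F·x)⊗(E·y) − (E·x)⊗(F·y)) (the action of the invariant element ω = (1/2)(H⊗D + D⊗H) + F⊗E − E⊗F). Then, with a = λ₁μ₂ + λ₂μ₁ and b = λ₁ + λ₂: Ω = ((a+b)/2)·Y_{t₁,t₂}∘L_{t₁,t₂} + ((a−b)/2)·Y'_{t₁,t₂}∘L'_{t₁,t₂}. -/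
set_option linter.unusedVariables false

open TensorProduct

noncomputable section

/-- the action of ω = (1/2)(H⊗D + D⊗H) + F⊗E − E⊗F on V_{t₁}⊗V_{t₂}:
on homogeneous elements,
ω(x⊗y) = (1/2)((H·x)⊗(D·y) + (D·x)⊗(H·y)) + (−1)^{deg x}((F·x)⊗(E·y) − (E·x)⊗(F·y)),
the sign being implemented by the parity operator. -/
def omegaMap (t₁ t₂ : Triple) : VV →ₗ[ℚ] VV :=
  (1/2 : ℚ) • (TensorProduct.map (opH t₁) (opD t₂) + TensorProduct.map (opD t₁) (opH t₂))
  + TensorProduct.map (opF t₁ ∘ₗ opJ t₁) (opE t₂)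
  + (-1 : ℚ) • TensorProduct.map (opE t₁ ∘ₗ opJ t₁) (opF t₂)

theorem bmap_apply' {M : Type*} [AddCommGroup M] [Module ℚ M] (p q : M) (x : V) :
    bmap p q x = x.1 • p + x.2 • q := by
  simp [bmap]

theorem sgn_sq' (s : ZMod 2) : sgn s * sgn s = 1 := by
  unfold sgn; split_ifs <;> norm_num

theorem vec' (a b : ℚ) : ((a, b) : V) = a • vv + b • ww := by
  simp [vv, ww]

theorem opH_v (t : Triple) : opH t vv = (t.mu + 1) • vv := by simp [opH, vv]
theorem opH_w (t : Triple) : opH t ww = (t.mu - 1) • ww := by simp [opH, ww]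
theorem opD_x (t : Triple) (x : V) : opD t x = t.lam • x := by simp [opD]
theorem opE_v (t : Triple) : opE t vv = 0 := by simp [opE, vv]
theorem opE_w (t : Triple) : opE t ww = t.lam • vv := by simp [opE, vv, ww]
theorem opF_v (t : Triple) : opF t vv = ww := by simp [opF, vv, ww]
theorem opF_w (t : Triple) : opF t ww = 0 := by simp [opF, ww]
theorem opJ_v (t : Triple) : opJ t vv = sgn t.sg • vv := by simp [opJ, vv]
theorem opJ_w (t : Triple) : opJ t ww = (-sgn t.sg) • ww := by simp [opJ, ww]

theorem ext_basis (f g : VV →ₗ[ℚ] VV)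
    (h1 : f (vv ⊗ₜ[ℚ] vv) = g (vv ⊗ₜ[ℚ] vv)) (h2 : f (vv ⊗ₜ[ℚ] ww) = g (vv ⊗ₜ[ℚ] ww))
    (h3 : f (ww ⊗ₜ[ℚ] vv) = g (ww ⊗ₜ[ℚ] vv)) (h4 : f (ww ⊗ₜ[ℚ] ww) = g (ww ⊗ₜ[ℚ] ww)) :
    f = g := by
  apply TensorProduct.ext'
  rintro ⟨a, b⟩ ⟨c, d⟩
  rw [vec' a b, vec' c d]
  simp only [TensorProduct.add_tmul, TensorProduct.tmul_add, ← TensorProduct.smul_tmul',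
    TensorProduct.tmul_smul, map_add, map_smul, h1, h2, h3, h4]

/-- Ω = ((a+b)/2)·Y∘L + ((a−b)/2)·Y'∘L' with
a = λ₁μ₂+λ₂μ₁ and b = λ₁+λ₂. -/
theorem stmt18 (t₁ t₂ : Triple) (h₁ : t₁.lam ≠ 0) (h₂ : t₂.lam ≠ 0)
    (h₁₂ : t₁.lam + t₂.lam ≠ 0) :
    omegaMap t₁ t₂ =
      ((t₁.lam * t₂.mu + t₂.lam * t₁.mu + (t₁.lam + t₂.lam)) / 2) •
        (Ymap t₁ t₂ ∘ₗ Lmap t₁ t₂)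
      + ((t₁.lam * t₂.mu + t₂.lam * t₁.mu - (t₁.lam + t₂.lam)) / 2) •
        (Y'map t₁ t₂ ∘ₗ L'map t₁ t₂) := by
  have hs := sgn_sq' t₁.sg
  apply ext_basis
  all_goals
    simp only [omegaMap, Ymap, Y'map, Lmap, L'map, LinearMap.add_apply, LinearMap.smul_apply,
      LinearMap.comp_apply, TensorProduct.map_tmul, TensorProduct.lift.tmul,
      LinearMap.mk₂_apply, bmap_apply', opH_v, opH_w, opD_x, opE_v, opE_w, opF_v, opF_w,
      opJ_v, opJ_w, map_smul, ← TensorProduct.smul_tmul', TensorProduct.tmul_smul,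
      TensorProduct.tmul_zero, TensorProduct.zero_tmul, smul_zero]
    simp only [show vv.1 = 1 from rfl, show vv.2 = 0 from rfl, show ww.1 = 0 from rfl,
      show ww.2 = 1 from rfl]
    match_scalars <;> field_simp <;> grind
end
end
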